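/- For Ψ ∈ Λ^k(U,𝔥) and Φ ∈ Λ¹(U,𝔥), one has Ψ ∧^{,} (Φ∧Φ) = (Ψ ∧^⟨,⟩ Φ) ∧^{,} Φ. -/

import Mathlib

open scoped TensorProduct

noncomputable section

/-- `V`-valued `k`-forms on `ℝⁿ` (to be considered on an open set `U ⊆ ℝⁿ`):
fields of alternating `k`-multilinear maps, i.e. `Λᵏ(U, V)`. -/
abbrev Form (n k : ℕ) (V : Type*) [AddCommGroup V] [Module ℝ V] :=
  (Fin n → ℝ) → ((Fin n → ℝ) [⋀^Fin k]→ₗ[ℝ] V)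

/-- A form is smooth on `U` if all of its scalar components are `C^∞` on `U`. -/
def SmoothFormOn {n k : ℕ} {V : Type*} [NormedAddCommGroup V] [NormedSpace ℝ V]
    (U : Set (Fin n → ℝ)) (ω : Form n k V) : Prop :=
  ∀ v : Fin k → (Fin n → ℝ), ContDiffOn ℝ (⊤ : ℕ∞) (fun x => ω x v) U

/-- Wedge product of vector valued forms along a bilinear pairing `β`:
writing `ω = Σ ωᵃ Xₐ` and `η = Σ ηᵇ Y_b`, `ω ∧^β η = Σ ωᵃ ∧ ηᵇ β Xₐ Y_b`. -/
def wedgeB {n k l : ℕ} {V W X : Type*} [AddCommGroup V] [Module ℝ V]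
    [AddCommGroup W] [Module ℝ W] [AddCommGroup X] [Module ℝ X]
    (β : V →ₗ[ℝ] W →ₗ[ℝ] X) (ω : Form n k V) (η : Form n l W) : Form n (k + l) X :=
  fun x => (TensorProduct.lift β).compAlternatingMap
    (((ω x).domCoprod (η x)).domDomCongr finSumFinEquiv)

/-- Apply a linear map (such as `α` or `δ`) to a vector valued form componentwise. -/
def mapV {n k : ℕ} {V W : Type*} [AddCommGroup V] [Module ℝ V]
    [AddCommGroup W] [Module ℝ W] (f : V →ₗ[ℝ] W) (ω : Form n k V) : Form n k W :=
  fun x => f.compAlternatingMap (ω x)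

/-- Reinterpret a `k`-form as an `l`-form along a proof of `k = l`. -/
def castD {n k l : ℕ} {V : Type*} [AddCommGroup V] [Module ℝ V]
    (h : k = l) (ω : Form n k V) : Form n l V :=
  fun x => (ω x).domDomCongr (finCongr h)

/-- The commutator bracket `[x, y] = x*y - y*x` of a matrix (associative) algebra,
as a bilinear map. -/
def lieB (H : Type*) [Ring H] [Algebra ℝ H] : H →ₗ[ℝ] H →ₗ[ℝ] H :=
  LinearMap.mul ℝ H - (LinearMap.mul ℝ H).flip

/-- A differential 2-crossed module `𝔩 →δ 𝔥 →α 𝔤` of matrix Lie algebras (realized as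
associative `ℝ`-algebras, with the commutator bracket `⁅x, y⁆ = x*y - y*x`), with
left actions `▷` of `𝔤` on `𝔥` and on `𝔩` by derivations (and on `𝔤` by the adjoint
action) and a `𝔤`-equivariant bilinear Peiffer lifting `{,} : 𝔥 × 𝔥 → 𝔩`. -/
structure TwoCrossed (𝔤 𝔥 𝔩 : Type*) [Ring 𝔤] [Algebra ℝ 𝔤] [Ring 𝔥] [Algebra ℝ 𝔥]
    [Ring 𝔩] [Algebra ℝ 𝔩] where
  /-- the Lie algebra homomorphism `δ : 𝔩 → 𝔥` -/
  δ : 𝔩 →ₗ[ℝ] 𝔥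
  /-- the Lie algebra homomorphism `α : 𝔥 → 𝔤` -/
  α : 𝔥 →ₗ[ℝ] 𝔤
  /-- the action `▷` of `𝔤` on `𝔥` -/
  ρ𝔥 : 𝔤 →ₗ[ℝ] 𝔥 →ₗ[ℝ] 𝔥
  /-- the action `▷` of `𝔤` on `𝔩` -/
  ρ𝔩 : 𝔤 →ₗ[ℝ] 𝔩 →ₗ[ℝ] 𝔩
  /-- the Peiffer lifting `{,} : 𝔥 × 𝔥 → 𝔩` -/
  pf : 𝔥 →ₗ[ℝ] 𝔥 →ₗ[ℝ] 𝔩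
  δ_lie : ∀ x y : 𝔩, δ ⁅x, y⁆ = ⁅δ x, δ y⁆
  α_lie : ∀ u v : 𝔥, α ⁅u, v⁆ = ⁅α u, α v⁆
  /-- `𝔤` acts on `𝔥` by derivations -/
  ρ𝔥_deriv : ∀ (X : 𝔤) (u v : 𝔥), ρ𝔥 X ⁅u, v⁆ = ⁅ρ𝔥 X u, v⁆ + ⁅u, ρ𝔥 X v⁆
  /-- `▷` is a Lie algebra action of `𝔤` on `𝔥` -/
  ρ𝔥_lie : ∀ (X Y : 𝔤) (u : 𝔥), ρ𝔥 ⁅X, Y⁆ u = ρ𝔥 X (ρ𝔥 Y u) - ρ𝔥 Y (ρ𝔥 X u)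
  /-- `𝔤` acts on `𝔩` by derivations -/
  ρ𝔩_deriv : ∀ (X : 𝔤) (x y : 𝔩), ρ𝔩 X ⁅x, y⁆ = ⁅ρ𝔩 X x, y⁆ + ⁅x, ρ𝔩 X y⁆
  /-- `▷` is a Lie algebra action of `𝔤` on `𝔩` -/
  ρ𝔩_lie : ∀ (X Y : 𝔤) (x : 𝔩), ρ𝔩 ⁅X, Y⁆ x = ρ𝔩 X (ρ𝔩 Y x) - ρ𝔩 Y (ρ𝔩 X x)
  /-- the Peiffer lifting is `𝔤`-equivariant: `X ▷ {u,v} = {X ▷ u, v} + {u, X ▷ v}` -/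
  pf_equivariant : ∀ (X : 𝔤) (u v : 𝔥), ρ𝔩 X (pf u v) = pf (ρ𝔥 X u) v + pf u (ρ𝔥 X v)
  /-- `δ` is `𝔤`-equivariant -/
  δ_equivariant : ∀ (X : 𝔤) (x : 𝔩), δ (ρ𝔩 X x) = ρ𝔥 X (δ x)
  /-- `α` is `𝔤`-equivariant (`𝔤` acting on itself by the adjoint action) -/
  α_equivariant : ∀ (X : 𝔤) (u : 𝔥), α (ρ𝔥 X u) = ⁅X, α u⁆
  /-- `𝔩 →δ 𝔥 →α 𝔤` is a complex -/
  comp_zero : ∀ x : 𝔩, α (δ x) = 0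
  /-- axiom (2): `δ{u, v} = ⟨u, v⟩ = [u, v] - α(u) ▷ v` -/
  ax2 : ∀ u v : 𝔥, δ (pf u v) = ⁅u, v⁆ - ρ𝔥 (α u) v
  /-- axiom (3): `[x, y] = {δ x, δ y}` for `x, y ∈ 𝔩` -/
  ax3 : ∀ x y : 𝔩, pf (δ x) (δ y) = ⁅x, y⁆
  /-- axiom (4): `{[u,v], w} = α(u)▷{v,w} + {u,[v,w]} - α(v)▷{u,w} - {v,[u,w]}` -/
  ax4 : ∀ u v w : 𝔥, pf ⁅u, v⁆ w =
    ρ𝔩 (α u) (pf v w) + pf u ⁅v, w⁆ - ρ𝔩 (α v) (pf u w) - pf v ⁅u, w⁆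
  /-- axiom (5): `{u, [v,w]} = {δ{u,v}, w} - {δ{u,w}, v}` -/
  ax5 : ∀ u v w : 𝔥, pf u ⁅v, w⁆ = pf (δ (pf u v)) w - pf (δ (pf u w)) v
  /-- axiom (6): `{δ x, v} + {v, δ x} = -α(v) ▷ x` -/
  ax6 : ∀ (x : 𝔩) (v : 𝔥), pf (δ x) v + pf v (δ x) = - ρ𝔩 (α v) x

namespace TwoCrossed

variable {𝔤 𝔥 𝔩 : Type*} [Ring 𝔤] [Algebra ℝ 𝔤] [Ring 𝔥] [Algebra ℝ 𝔥] [Ring 𝔩] [Algebra ℝ 𝔩]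

/-- The Peiffer commutator pairing `⟨u, v⟩ := [u, v] - α(u) ▷ v`, bilinearly. -/
def ang (T : TwoCrossed 𝔤 𝔥 𝔩) : 𝔥 →ₗ[ℝ] 𝔥 →ₗ[ℝ] 𝔥 :=
  (LinearMap.mul ℝ 𝔥 - (LinearMap.mul ℝ 𝔥).flip) - T.ρ𝔥 ∘ₗ T.α

/-- The action `v ▷' x := -{δ x, v}` of `𝔥` on `𝔩`, bilinearly. -/
def rhoPrime (T : TwoCrossed 𝔤 𝔥 𝔩) : 𝔥 →ₗ[ℝ] 𝔩 →ₗ[ℝ] 𝔩 :=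
  - (T.pf ∘ₗ T.δ).flip

end TwoCrossed

namespace MultilinearMap

variable {ι ι' M N : Type*} [Fintype ι] [DecidableEq ι] [Fintype ι'] [DecidableEq ι']
  [AddCommGroup M] [Module ℝ M] [AddCommGroup N] [Module ℝ N]

/-- Alternatization commutes with reindexing along an equivalence. -/
theorem alternatization_domDomCongr (e : ι ≃ ι') (m : MultilinearMap ℝ (fun _ : ι => M) N) :
    alternatization (m.domDomCongr e) = (alternatization m).domDomCongr e := by
  ext v
  simp only [alternatization_apply, AlternatingMap.domDomCongr_apply, domDomCongr_apply]
  refine (Fintype.sum_equiv e.permCongr _ _ fun σ => ?_).symm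
  simp [Equiv.permCongr_apply]

/-- Reindexing by a transposition negates the alternatization. -/
theorem alternatization_domDomCongr_swap {i j : ι} (hij : i ≠ j)
    (m : MultilinearMap ℝ (fun _ : ι => M) N) :
    alternatization (m.domDomCongr (Equiv.swap i j)) = -alternatization m := by
  rw [alternatization_domDomCongr, AlternatingMap.domDomCongr_perm, Equiv.Perm.sign_swap hij]
  simp

/-- Two multilinear maps have the same alternatization as soon as their antisymmetrizations in
one pair of arguments agree. -/
theorem alternatization_eq_of_sub_swap_eq {i j : ι} (hij : i ≠ j)
    {m m' : MultilinearMap ℝ (fun _ : ι => M) N}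
    (h : m - m.domDomCongr (Equiv.swap i j) = m' - m'.domDomCongr (Equiv.swap i j)) :
    alternatization m = alternatization m' := by
  have h2 := congrArg alternatization h
  simp only [map_sub, alternatization_domDomCongr_swap hij, sub_neg_eq_add, ← two_smul ℝ] at h2
  exact smul_right_injective _ (two_ne_zero' ℝ) h2

end MultilinearMap

/-- The (non-alternating) product of multilinear maps along a bilinear pairing. -/
def mulB {n k l : ℕ} {V W X : Type*} [AddCommGroup V] [Module ℝ V]
    [AddCommGroup W] [Module ℝ W] [AddCommGroup X] [Module ℝ X] (β : V →ₗ[ℝ] W →ₗ[ℝ] X)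
    (a : MultilinearMap ℝ (fun _ : Fin k => Fin n → ℝ) V)
    (b : MultilinearMap ℝ (fun _ : Fin l => Fin n → ℝ) W) :
    MultilinearMap ℝ (fun _ : Fin (k + l) => Fin n → ℝ) X :=
  (TensorProduct.lift β).compMultilinearMap ((a.domCoprod b).domDomCongr finSumFinEquiv)

section Wedge

variable {n k l : ℕ} {V W X : Type*} [AddCommGroup V] [Module ℝ V]
  [AddCommGroup W] [Module ℝ W] [AddCommGroup X] [Module ℝ X] (β : V →ₗ[ℝ] W →ₗ[ℝ] X)

theorem mulB_apply (a : MultilinearMap ℝ (fun _ : Fin k => Fin n → ℝ) V)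
    (b : MultilinearMap ℝ (fun _ : Fin l => Fin n → ℝ) W) (v : Fin (k + l) → Fin n → ℝ) :
    mulB β a b v = β (a fun i => v (Fin.castAdd l i)) (b fun i => v (Fin.natAdd k i)) := by
  simp [mulB]

/-- The wedge product of alternatizations is the alternatization of the product. -/
theorem wedgeB_alternatization (a : MultilinearMap ℝ (fun _ : Fin k => Fin n → ℝ) V)
    (b : MultilinearMap ℝ (fun _ : Fin l => Fin n → ℝ) W) {ω : Form n k V} {η : Form n l W}
    {x : Fin n → ℝ} (hω : ω x = a.alternatization) (hη : η x = b.alternatization) :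
    wedgeB β ω η x = (mulB β a b).alternatization := by
  rw [wedgeB, mulB, LinearMap.compMultilinearMap_alternatization,
    MultilinearMap.alternatization_domDomCongr, MultilinearMap.domCoprod_alternization, hω, hη]

theorem wedgeB_smul_left (c : ℝ) (ω : Form n k V) (η : Form n l W) :
    wedgeB β (c • ω) η = c • wedgeB β ω η := by
  funext x
  have h : (c • ω x).domCoprod (η x) = c • (ω x).domCoprod (η x) := by
    rw [← AlternatingMap.domCoprod'_apply, ← TensorProduct.smul_tmul', map_smul,
      AlternatingMap.domCoprod'_apply]
  ext v
  simp [wedgeB, h]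

end Wedge

theorem AlternatingMap.eq_alternatization_of_fin_one {M V : Type*} [AddCommGroup M] [Module ℝ M]
    [AddCommGroup V] [Module ℝ V] (a : M [⋀^Fin 1]→ₗ[ℝ] V) :
    a = MultilinearMap.alternatization (a : MultilinearMap ℝ (fun _ : Fin 1 => M) V) := by
  simp [AlternatingMap.coe_alternatization]

theorem TwoCrossed.pf_ang_sub {𝔤 𝔥 𝔩 : Type*} [Ring 𝔤] [Algebra ℝ 𝔤] [Ring 𝔥] [Algebra ℝ 𝔥]
    [Ring 𝔩] [Algebra ℝ 𝔩] (T : TwoCrossed 𝔤 𝔥 𝔩) (u v w : 𝔥) :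
    T.pf u (v * w) - T.pf u (w * v) = T.pf (T.ang u v) w - T.pf (T.ang u w) v := by
  have hang (u v : 𝔥) : T.ang u v = T.δ (T.pf u v) := by
    simp [TwoCrossed.ang, T.ax2, Ring.lie_def]
  rw [hang, hang, ← T.ax5, Ring.lie_def, map_sub]

/-- for `Ψ ∈ Λᵏ(U,𝔥)` and `Φ ∈ Λ¹(U,𝔥)`,
`Ψ ∧^{,} (Φ∧Φ) = (Ψ ∧^⟨,⟩ Φ) ∧^{,} Φ`. -/
theorem statement_4 {n : ℕ} {U : Set (Fin n → ℝ)} (hU : IsOpen U)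
    {𝔤 𝔥 𝔩 : Type*} [NormedRing 𝔤] [NormedAlgebra ℝ 𝔤] [NormedRing 𝔥] [NormedAlgebra ℝ 𝔥]
    [NormedRing 𝔩] [NormedAlgebra ℝ 𝔩] (T : TwoCrossed 𝔤 𝔥 𝔩)
    {k : ℕ} (Ψ : Form n k 𝔥) (Φ : Form n 1 𝔥)
    (hΨ : SmoothFormOn U Ψ) (hΦ : SmoothFormOn U Φ) :
    ∀ x ∈ U, wedgeB T.pf Ψ (wedgeB (LinearMap.mul ℝ 𝔥) Φ Φ) x
      = wedgeB T.pf (wedgeB T.ang Ψ Φ) Φ x := by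
  intro x _
  set a : MultilinearMap ℝ (fun _ : Fin k => Fin n → ℝ) 𝔥 := (Ψ x).toMultilinearMap with ha
  set b : MultilinearMap ℝ (fun _ : Fin 1 => Fin n → ℝ) 𝔥 := (Φ x).toMultilinearMap
  have hΦx : Φ x = b.alternatization := (Φ x).eq_alternatization_of_fin_one
  have hΨx : ((k.factorial : ℝ) • Ψ) x = a.alternatization := by
    rw [Pi.smul_apply, ha, AlternatingMap.coe_alternatization, Fintype.card_fin,
      Nat.cast_smul_eq_nsmul]
  have hleft := wedgeB_alternatization T.pf a _ hΨx
    (wedgeB_alternatization (LinearMap.mul ℝ 𝔥) b b hΦx hΦx)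
  have hright := wedgeB_alternatization T.pf _ b
    (wedgeB_alternatization T.ang a b hΨx hΦx) hΦx
  rw [wedgeB_smul_left] at hleft
  rw [wedgeB_smul_left, wedgeB_smul_left] at hright
  refine smul_right_injective _ (Nat.cast_ne_zero.2 k.factorial_ne_zero : (k.factorial : ℝ) ≠ 0) ?_
  refine hleft.trans (Eq.trans ?_ hright.symm)
  let i : Fin (k + 2) := Fin.natAdd k 0
  let j : Fin (k + 2) := Fin.natAdd k 1
  have hij : i ≠ j := by simp [i, j, Fin.ext_iff]
  refine MultilinearMap.alternatization_eq_of_sub_swap_eq hij ?_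
  have hmul (v : Fin (k + 2) → Fin n → ℝ) :
      mulB T.pf a (mulB (LinearMap.mul ℝ 𝔥) b b) v =
        T.pf (a fun l => v (Fin.castAdd 2 l)) (b (fun _ => v i) * b (fun _ => v j)) := by
    rw [mulB_apply, mulB_apply, LinearMap.mul_apply']
    exact congrArg₂ (fun p q => T.pf _ (b p * b q))
      (funext fun l => by rw [Fin.fin_one_eq_zero l]; rfl)
      (funext fun l => by rw [Fin.fin_one_eq_zero l]; rfl)
  have hang (v : Fin (k + 2) → Fin n → ℝ) :
      mulB T.pf (mulB T.ang a b) b v =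
        T.pf (T.ang (a fun l => v (Fin.castAdd 2 l)) (b fun _ => v i)) (b fun _ => v j) := by
    refine (mulB_apply _ _ _ _).trans ?_
    rw [mulB_apply]
    exact congrArg₂ (fun p q => T.pf (T.ang _ (b p)) (b q))
      (funext fun l => by rw [Fin.fin_one_eq_zero l]; rfl)
      (funext fun l => by rw [Fin.fin_one_eq_zero l]; rfl)
  refine MultilinearMap.ext fun v => ?_
  have hfix (l : Fin k) : Equiv.swap i j (Fin.castAdd 2 l) = Fin.castAdd 2 l := by
    apply Equiv.swap_apply_of_ne_of_ne <;> simp [i, j, Fin.ext_iff] <;> omega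
  let v' : Fin (k + 2) → Fin n → ℝ := fun l => v (Equiv.swap i j l)
  refine (congrArg₂ (· - ·) (hmul v) (hmul v')).trans
    (Eq.trans ?_ (congrArg₂ (· - ·) (hang v) (hang v')).symm)
  simp only [v', hfix, Equiv.swap_apply_left, Equiv.swap_apply_right]
  exact T.pf_ang_sub _ _ _

end
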